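/- Let 𝔤 be a finite-dimensional complex semisimple Lie algebra, (e,h,f) an sl2-triple in 𝔤 with e a distinguished nilpotent element, and let m_r be the largest eigenvalue of the restriction of ad h to the centralizer 𝔤^e. Then the eigenspace of ad h in 𝔤^e for the eigenvalue m_r is contained in the centre 𝔷(𝔤^e) of 𝔤^e; consequently it coincides with 𝔷_max, the eigenspace of the restriction of ad h to 𝔷(𝔤^e) for its largest eigenvalue. -/

import Mathlib

open scoped ComplexOrder

/-- The centralizer `𝔤^e = {x ∈ 𝔤 : ⁅x, e⁆ = 0}` of an element `e`, as a Lie subalgebra. -/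
def centralizer (L : Type*) [LieRing L] [LieAlgebra ℂ L] (e : L) : LieSubalgebra ℂ L where
  carrier := {x : L | ⁅x, e⁆ = 0}
  add_mem' := fun {a b} ha hb => by
    simp only [Set.mem_setOf_eq] at *
    rw [add_lie, ha, hb, add_zero]
  zero_mem' := by simp
  smul_mem' := fun c a ha => by
    simp only [Set.mem_setOf_eq] at *
    rw [smul_lie, ha, smul_zero]
  lie_mem' := fun {a b} ha hb => by
    simp only [Set.mem_setOf_eq] at *
    simp [lie_lie, ha, hb]

/-- Membership in the centre `𝔷(𝔤^e)` of the centralizer of `e`: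
`v` centralizes `e` and commutes with every element of `𝔤^e`. -/
def InCenterOfCentralizer (L : Type*) [LieRing L] [LieAlgebra ℂ L] (e v : L) : Prop :=
  ⁅v, e⁆ = 0 ∧ ∀ y : L, ⁅y, e⁆ = 0 → ⁅v, y⁆ = 0

/-- The centre `𝔷(𝔤^e)` of the centralizer of `e`, as a subspace of `L`. -/
def zCenter (L : Type*) [LieRing L] [LieAlgebra ℂ L] (e : L) : Submodule ℂ L where
  carrier := {v : L | ⁅v, e⁆ = 0 ∧ ∀ y : L, ⁅y, e⁆ = 0 → ⁅v, y⁆ = 0}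
  add_mem' := fun {a b} ha hb => ⟨by rw [add_lie, ha.1, hb.1, add_zero],
    fun y hy => by rw [add_lie, ha.2 y hy, hb.2 y hy, add_zero]⟩
  zero_mem' := ⟨zero_lie e, fun y _ => zero_lie y⟩
  smul_mem' := fun c a ha => ⟨by rw [smul_lie, ha.1, smul_zero],
    fun y hy => by rw [smul_lie, ha.2 y hy, smul_zero]⟩

/-- Property (P) for an `sl₂`-triple `(e, h, f)`: for every nonzero `v ∈ 𝔷(𝔤^e)`, the
eigenspace `𝔷_max` of the restriction of `ad h` to `𝔷(𝔤^e)` for its largest eigenvalue is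
contained in `[[f, 𝔤^e], v] = {⁅⁅f, x⁆, v⁆ : x ∈ 𝔤^e}`. -/
def PropertyP (L : Type*) [LieRing L] [LieAlgebra ℂ L] (e h f : L) : Prop :=
  ∀ m : ℂ,
    (∃ z : L, z ≠ 0 ∧ InCenterOfCentralizer L e z ∧ ⁅h, z⁆ = m • z) →
    (∀ m' : ℂ, (∃ z : L, z ≠ 0 ∧ InCenterOfCentralizer L e z ∧ ⁅h, z⁆ = m' • z) → m' ≤ m) →
    ∀ v : L, InCenterOfCentralizer L e v → v ≠ 0 →
      ∀ z : L, InCenterOfCentralizer L e z → ⁅h, z⁆ = m • z →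
        ∃ x : L, ⁅x, e⁆ = 0 ∧ ⁅⁅f, x⁆, v⁆ = z

/-- The stabilizer `{x ∈ 𝔮 : ξ(⁅x, y⁆) = 0 for all y ∈ 𝔮}` of a linear functional `ξ`. -/
def coadStab (Q : Type*) [LieRing Q] [LieAlgebra ℂ Q] (ξ : Module.Dual ℂ Q) : Submodule ℂ Q where
  carrier := {x : Q | ∀ y : Q, ξ ⁅x, y⁆ = 0}
  add_mem' := fun {a b} ha hb y => by rw [add_lie, map_add, ha y, hb y, add_zero]
  zero_mem' := fun y => by rw [zero_lie, map_zero]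
  smul_mem' := fun c a ha y => by rw [smul_lie, map_smul, ha y, smul_zero]

/-- The index of a complex Lie algebra:
`ind 𝔮 = min_{ξ ∈ 𝔮*} dim {x ∈ 𝔮 : ξ(⁅x, y⁆) = 0 for all y ∈ 𝔮}`. -/
noncomputable def lieIndex (Q : Type*) [LieRing Q] [LieAlgebra ℂ Q] : ℕ :=
  ⨅ ξ : Module.Dual ℂ Q, Module.finrank ℂ ↥(coadStab Q ξ)

/-- A nilpotent element `e` is distinguished if the only `x ∈ 𝔤^e` such that `ad x` is a
semisimple endomorphism of `𝔤` is `x = 0`. -/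
def IsDistinguished (L : Type*) [LieRing L] [LieAlgebra ℂ L] (e : L) : Prop :=
  ∀ x : L, ⁅x, e⁆ = 0 → (LieAlgebra.ad ℂ L x).IsSemisimple → x = 0

open Module.End in
/-- A nonzero generalized eigenvector in an invariant subspace yields an eigenvector there. -/
lemma exists_eigenvector_mem_of_mem_maxGenEigenspace {K V : Type*} [CommRing K] [AddCommGroup V]
    [Module K V] {T : Module.End K V} {p : Submodule K V} (hp : ∀ x ∈ p, T x ∈ p) {μ : K} {m : V}
    (hm : m ∈ T.maxGenEigenspace μ) (hmp : m ∈ p) (hm0 : m ≠ 0) :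
    ∃ v ∈ p, v ≠ 0 ∧ T v = μ • v := by
  obtain ⟨k, hk⟩ := (mem_maxGenEigenspace T μ m).mp hm
  obtain ⟨n, hn, hn'⟩ := Nat.exists_not_and_succ_of_not_zero_of_exists
    (p := fun k ↦ ((T - μ • (1 : Module.End K V)) ^ k) m = 0) (by simpa using hm0) ⟨k, hk⟩
  refine ⟨_, ?_, hn, ?_⟩
  · clear hn hn'
    induction n with
    | zero => simpa using hmp
    | succ n ih =>
      rw [pow_succ', Module.End.mul_apply]
      exact p.sub_mem (hp _ ih) (p.smul_mem μ ih)
  · rw [pow_succ', Module.End.mul_apply] at hn'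
    simpa [sub_eq_zero] using hn'

open Module.End LieAlgebra in
/-- The semisimple part of an inner derivation of a Lie algebra with nondegenerate Killing form
is inner. -/
lemma exists_isSemisimple_ad_isNilpotent_sub {K L : Type*} [Field K] [IsAlgClosed K] [LieRing L]
    [LieAlgebra K L] [FiniteDimensional K L] [IsKilling K L] (x : L) :
    ∃ s : L, (ad K L s).IsSemisimple ∧ IsNilpotent (ad K L x - ad K L s) ∧
      ∀ y : L, ⁅x, y⁆ = 0 → ⁅s, y⁆ = 0 := by
  obtain ⟨N, -, S, hS₀, hN, hS, hSN⟩ := (ad K L x).exists_isNilpotent_isSemisimple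
  replace hS₀ : Commute (ad K L x) S := Algebra.commute_of_mem_adjoin_self hS₀
  rw [eq_sub_of_add_eq hSN.symm] at hN
  have aux {μ : K} {y : L} (hy : y ∈ (ad K L x).maxGenEigenspace μ) : S y = μ • y :=
    apply_eq_of_mem_of_comm_of_isFinitelySemisimple_of_isNil hy hS₀ hS.isFinitelySemisimple hN
  have h_top := iSup_maxGenEigenspace_eq_top (ad K L x)
  have h_der (y z : L) : S ⁅y, z⁆ = ⁅S y, z⁆ + ⁅y, S z⁆ := by
    have hy : y ∈ ⨆ μ : K, (ad K L x).maxGenEigenspace μ := by simp [h_top]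
    have hz : z ∈ ⨆ μ : K, (ad K L x).maxGenEigenspace μ := by simp [h_top]
    induction hy using Submodule.iSup_induction' with
    | mem α y hy =>
      induction hz using Submodule.iSup_induction' with
      | mem β z hz =>
        rw [aux hy, aux hz, aux (LieModule.lie_mem_maxGenEigenspace_toEnd hy hz), smul_lie,
          lie_smul, ← add_smul]
      | zero => simp
      | add _ _ _ _ h h' => simp only [lie_add, map_add, h, h']; abel
    | zero => simp
    | add _ _ _ _ h h' => simp only [add_lie, map_add, h, h']; abel
  let S' : LieDerivation K L L :=
    ⟨S, fun y z ↦ by rw [h_der, ← lie_skew z, sub_neg_eq_add, add_comm]⟩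
  obtain ⟨s, hs⟩ := LieDerivation.IsKilling.exists_eq_ad S'
  have hs' : ad K L s = S := by rw [← LieDerivation.coe_ad_apply_eq_ad_apply s, hs]
  refine ⟨s, hs' ▸ hS, hs' ▸ hN, fun y hy ↦ ?_⟩
  have hy' : y ∈ (ad K L x).maxGenEigenspace 0 :=
    (mem_maxGenEigenspace _ _ _).mpr ⟨1, by simpa using hy⟩
  rw [← ad_apply K, hs', aux hy', zero_smul]

namespace IsSl2Triple

open LieAlgebra Module.End

variable {K L : Type*} [Field K] [LieRing L] [LieAlgebra K L] {h e f : L}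

variable (K) in
/-- The adjoint action of the Casimir element `h² + 2h + 4fe` of an `sl₂`-triple. -/
def casimir (h e f : L) : Module.End K L :=
  ad K L h * ad K L h + (2 : K) • ad K L h + (4 : K) • (ad K L f * ad K L e)

lemma casimir_apply (v : L) :
    casimir K h e f v = ⁅h, ⁅h, v⁆⁆ + (2 : K) • ⁅h, v⁆ + (4 : K) • ⁅f, ⁅e, v⁆⁆ := rfl

lemma casimir_symm (t : IsSl2Triple h e f) : casimir K (-h) f e = casimir K h e f := by
  ext v
  have : ⁅e, ⁅f, v⁆⁆ = ⁅h, v⁆ + ⁅f, ⁅e, v⁆⁆ := by rw [leibniz_lie, t.lie_e_f]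
  simp only [casimir_apply, this, neg_lie, lie_neg]
  module

lemma commute_casimir_ad_h (t : IsSl2Triple h e f) :
    Commute (casimir K h e f) (ad K L h) := by
  ext v
  simp only [Module.End.mul_apply, casimir_apply, ad_apply, lie_add, lie_smul]
  have : ⁅h, ⁅f, ⁅e, v⁆⁆⁆ = ⁅f, ⁅e, ⁅h, v⁆⁆⁆ := by
    rw [leibniz_lie h f, leibniz_lie h e, t.lie_h_e_smul K, t.lie_lie_smul_f K]
    simp only [neg_lie, smul_lie, lie_add, lie_smul]
    module
  rw [this]

lemma commute_casimir_ad_e (t : IsSl2Triple h e f) :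
    Commute (casimir K h e f) (ad K L e) := by
  ext v
  have h₁ (w : L) : ⁅h, ⁅e, w⁆⁆ = (2 : K) • ⁅e, w⁆ + ⁅e, ⁅h, w⁆⁆ := by
    rw [leibniz_lie, t.lie_h_e_smul K, smul_lie]
  have h₂ (w : L) : ⁅e, ⁅f, w⁆⁆ = ⁅h, w⁆ + ⁅f, ⁅e, w⁆⁆ := by rw [leibniz_lie, t.lie_e_f]
  simp only [Module.End.mul_apply, casimir_apply, ad_apply, lie_add, lie_smul, h₁, h₂]
  module

variable [CharZero K] [FiniteDimensional K L]

/-- Primitive vectors in the generalized kernel of the Casimir operator have weight zero. -/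
lemma weight_eq_zero_of_mem_maxGenEigenspace_casimir (t : IsSl2Triple h e f) {v : L} {μ : K}
    (P : t.HasPrimitiveVectorWith v μ) (hv : v ∈ (casimir K h e f).maxGenEigenspace 0) :
    μ = 0 := by
  obtain ⟨n, rfl⟩ := P.exists_nat
  have hC : v ∈ (casimir K h e f).maxGenEigenspace (n * (n + 2) : K) := by
    refine eigenspace_le_maxGenEigenspace (mem_eigenspace_iff.mpr ?_)
    simp only [casimir_apply, P.lie_h, P.lie_e, lie_smul, lie_zero]
    module
  by_contra hn
  have hne : (0 : K) ≠ n * (n + 2) := by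
    refine (mul_ne_zero hn ?_).symm
    exact_mod_cast (by lia : n + 2 ≠ 0)
  exact P.ne_zero (Submodule.disjoint_def.mp (disjoint_genEigenspace _ hne ⊤ ⊤) v hv hC)

/-- Every weight of the generalized kernel of the Casimir operator is minus an even natural
number. -/
lemma exists_weight_eq_of_mem_maxGenEigenspace_casimir (t : IsSl2Triple h e f) {v : L} {μ : K}
    (hv0 : v ≠ 0) (hμ : ⁅h, v⁆ = μ • v) (hv : v ∈ (casimir K h e f).maxGenEigenspace 0) :
    ∃ n : ℕ, μ + 2 * n = 0 := by
  have hnil : ∃ k, (ad K L e ^ k) v = 0 := by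
    by_contra! hne
    have hs : (Set.range fun n : ℕ ↦ μ + 2 * n).Infinite :=
      Set.infinite_range_of_injective fun a b hab ↦ by simpa using hab
    refine hs (Set.Finite.subset (finite_hasEigenvalue (ad K L h)) ?_)
    rintro - ⟨n, rfl⟩
    exact hasEigenvalue_of_hasEigenvector
      ⟨mem_eigenspace_iff.mpr (t.lie_h_pow_toEnd_e hμ n), hne n⟩
  obtain ⟨n, hn, hn'⟩ := Nat.exists_not_and_succ_of_not_zero_of_exists
    (p := fun k ↦ (ad K L e ^ k) v = 0) (by simpa using hv0) hnil
  refine ⟨n, weight_eq_zero_of_mem_maxGenEigenspace_casimir t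
    ⟨hn, t.lie_h_pow_toEnd_e hμ n, (lie_e_pow_toEnd_e n).trans hn'⟩ ?_⟩
  exact mapsTo_maxGenEigenspace_of_comm (t.commute_casimir_ad_e.pow_right n) 0 hv

variable [IsAlgClosed K]

lemma maxGenEigenspace_casimir_le (t : IsSl2Triple h e f) :
    (casimir K h e f).maxGenEigenspace 0 ≤ (ad K L h).maxGenEigenspace 0 := by
  set V := (casimir K h e f).maxGenEigenspace 0
  have hV : ∀ x ∈ V, ad K L h x ∈ V := mapsTo_maxGenEigenspace_of_comm t.commute_casimir_ad_h 0
  rw [Submodule.eq_iSup_inf_genEigenspace ⊤ hV (iSup_maxGenEigenspace_eq_top (ad K L h))]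
  refine iSup_le fun μ x ⟨hxV, hx⟩ ↦ ?_
  by_cases hx0 : x = 0
  · simp [hx0]
  obtain ⟨v, hvV, hv0, hv⟩ := exists_eigenvector_mem_of_mem_maxGenEigenspace hV hx hxV hx0
  obtain ⟨n, hn⟩ := t.exists_weight_eq_of_mem_maxGenEigenspace_casimir hv0 hv hvV
  obtain ⟨m, hm⟩ := t.symm.exists_weight_eq_of_mem_maxGenEigenspace_casimir (μ := -μ) hv0
    (by rw [neg_lie, neg_smul, ← ad_apply K, hv]) (by rwa [t.casimir_symm])
  have : n + m = 0 := by
    have : (2 : K) * (n + m : ℕ) = 0 := by push_cast; linear_combination hn + hm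
    exact_mod_cast (mul_eq_zero_iff_left two_ne_zero).mp this
  obtain rfl : μ = 0 := by simpa [show n = 0 by lia] using hn
  exact hx

lemma lie_e_eq_zero_of_mem_maxGenEigenspace_casimir (t : IsSl2Triple h e f) {v : L}
    (hv : v ∈ (casimir K h e f).maxGenEigenspace 0) : ⁅e, v⁆ = 0 := by
  have he : e ∈ (ad K L h).maxGenEigenspace 2 :=
    eigenspace_le_maxGenEigenspace (mem_eigenspace_iff.mpr (t.lie_h_e_smul K))
  have h₂ := LieModule.lie_mem_maxGenEigenspace_toEnd he (t.maxGenEigenspace_casimir_le hv)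
  have h₀ := t.maxGenEigenspace_casimir_le
    (mapsTo_maxGenEigenspace_of_comm t.commute_casimir_ad_e 0 hv)
  exact Submodule.disjoint_def.mp
    (disjoint_genEigenspace (ad K L h) (by simp : (0 : K) ≠ 2 + 0) ⊤ ⊤) _ h₀ h₂

lemma lie_h_eq_zero_of_mem_maxGenEigenspace_casimir (t : IsSl2Triple h e f) {v : L}
    (hv : v ∈ (casimir K h e f).maxGenEigenspace 0) : ⁅h, v⁆ = 0 := by
  rw [← t.lie_e_f, lie_lie, t.lie_e_eq_zero_of_mem_maxGenEigenspace_casimir hv,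
    t.symm.lie_e_eq_zero_of_mem_maxGenEigenspace_casimir (K := K) (by rwa [t.casimir_symm])]
  simp

end IsSl2Triple

open LieAlgebra Module.End

section

variable {L : Type*} [LieRing L] [LieAlgebra ℂ L] {e h f : L}

lemma mem_centralizer {x : L} : x ∈ centralizer L e ↔ ⁅x, e⁆ = 0 := Iff.rfl

lemma lie_mem_centralizer (t : IsSl2Triple h e f) {x : L} (hx : ⁅x, e⁆ = 0) : ⁅⁅h, x⁆, e⁆ = 0 := by
  rw [lie_lie, hx, t.lie_h_e_smul ℂ, lie_smul, hx]
  simp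

variable [FiniteDimensional ℂ L] [LieAlgebra.IsSemisimple ℂ L]

lemma IsDistinguished.isNilpotent_ad (hd : IsDistinguished L e) {x : L} (hx : ⁅x, e⁆ = 0) :
    IsNilpotent (ad ℂ L x) := by
  obtain ⟨s, hs, hn, hc⟩ := exists_isSemisimple_ad_isNilpotent_sub (K := ℂ) x
  simpa [hd s (hc e hx) hs] using hn

/-- The centralizer of an `sl₂`-triple with distinguished nilpositive element is trivial. -/
lemma IsDistinguished.eq_zero_of_lie_eq_zero (hd : IsDistinguished L e) (t : IsSl2Triple h e f)
    {x : L} (hxe : ⁅x, e⁆ = 0) (hxh : ⁅x, h⁆ = 0) : x = 0 := by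
  let Z : LieSubalgebra ℂ L := centralizer L e ⊓ centralizer L h
  have hZ : LieModule.IsNilpotent Z L :=
    (LieModule.isNilpotent_iff_forall (R := ℂ)).mpr fun y ↦ hd.isNilpotent_ad y.2.1
  have hform : LieModule.traceForm ℂ Z L = 0 := LieModule.traceForm_eq_zero_of_isNilpotent ℂ Z L
  have hxf : ⁅x, f⁆ = 0 := by
    by_cases hx0 : x = 0
    · simp [hx0]
    have P : t.HasPrimitiveVectorWith x (0 : ℂ) :=
      ⟨hx0, by rw [← lie_skew, hxh]; simp, by rw [← lie_skew, hxe]; simp⟩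
    have := P.pow_toEnd_f_eq_zero_of_eq_nat (n := 0) (by simp)
    rw [← lie_skew, neg_eq_zero]
    simpa using this
  have hperp (a b : L) (ha : ⁅x, a⁆ = 0) : killingForm ℂ L x ⁅a, b⁆ = 0 := by
    rw [killingForm, ← LieModule.traceForm_apply_lie_apply, ha]
    simp
  set C := IsSl2Triple.casimir ℂ h e f
  suffices ∀ y, killingForm ℂ L x y = 0 from
    (IsKilling.killingForm_nondegenerate ℂ L).1 x this
  intro y
  obtain ⟨k, hk⟩ := Filter.eventually_atTop.mp (LinearMap.eventually_codisjoint_ker_pow_range_pow C)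
  obtain ⟨v, hv, -, ⟨u, rfl⟩, rfl⟩ :=
    Submodule.mem_sup.mp ((hk (k + 1) (by lia)).eq_top ▸ Submodule.mem_top (x := y))
  have hv' : v ∈ C.maxGenEigenspace 0 :=
    (mem_maxGenEigenspace _ _ _).mpr ⟨k + 1, by simpa using hv⟩
  have hvZ : v ∈ Z := by
    refine ⟨?_, ?_⟩ <;> refine mem_centralizer.mpr ?_ <;> rw [← lie_skew, neg_eq_zero]
    exacts [t.lie_e_eq_zero_of_mem_maxGenEigenspace_casimir hv',
      t.lie_h_eq_zero_of_mem_maxGenEigenspace_casimir hv']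
  have hxv : killingForm ℂ L x v = 0 :=
    LinearMap.congr_fun (LinearMap.congr_fun hform ⟨x, hxe, hxh⟩) ⟨v, hvZ⟩
  rw [map_add, hxv, pow_succ', Module.End.mul_apply, IsSl2Triple.casimir_apply, map_add, map_add,
    map_smul, map_smul, hperp h _ hxh, hperp h _ hxh, hperp f _ hxf]
  simp

lemma IsDistinguished.mem_center_of_top_weight (hd : IsDistinguished L e) (t : IsSl2Triple h e f)
    {mr : ℂ} (hmax : ∀ m : ℂ, (∃ z : L, z ≠ 0 ∧ ⁅z, e⁆ = 0 ∧ ⁅h, z⁆ = m • z) → m ≤ mr)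
    {z : L} (hz : ⁅z, e⁆ = 0) (hhz : ⁅h, z⁆ = mr • z) : InCenterOfCentralizer L e z := by
  refine ⟨hz, fun y hy ↦ ?_⟩
  let p : Submodule ℂ L := (centralizer L e).toSubmodule
  have hp : ∀ x ∈ p, ad ℂ L h x ∈ p := fun x hx ↦ lie_mem_centralizer t hx
  have hy' : y ∈ ⨆ μ, p ⊓ (ad ℂ L h).maxGenEigenspace μ := by
    have := Submodule.eq_iSup_inf_genEigenspace ⊤ hp (iSup_maxGenEigenspace_eq_top (ad ℂ L h))
    exact this.le hy
  clear hy
  induction hy' using Submodule.iSup_induction' with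
  | zero => simp
  | add _ _ _ _ h h' => simp [h, h']
  | mem μ y hy =>
    obtain ⟨hye, hyμ⟩ := hy
    by_contra hne
    have hy0 : y ≠ 0 := by rintro rfl; simp at hne
    obtain ⟨v, hvp, hv0, hv⟩ := exists_eigenvector_mem_of_mem_maxGenEigenspace hp hyμ hye hy0
    have P : t.HasPrimitiveVectorWith v μ :=
      ⟨hv0, hv, by rw [← lie_skew, mem_centralizer.mp hvp, neg_zero]⟩
    obtain ⟨n, rfl⟩ := P.exists_nat
    have hn : n ≠ 0 := by
      rintro rfl
      refine hv0 (hd.eq_zero_of_lie_eq_zero t hvp ?_)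
      rw [← lie_skew, ← ad_apply ℂ, hv]
      simp
    have hzm : z ∈ (ad ℂ L h).maxGenEigenspace mr :=
      eigenspace_le_maxGenEigenspace (mem_eigenspace_iff.mpr hhz)
    obtain ⟨w, hwp, hw0, hw⟩ := exists_eigenvector_mem_of_mem_maxGenEigenspace hp
      (LieModule.lie_mem_maxGenEigenspace_toEnd hzm hyμ) ((centralizer L e).lie_mem hz hye) hne
    have hle := hmax _ ⟨w, hw0, hwp, hw⟩
    have : (n : ℂ) ≤ 0 := by simpa using hle
    exact hn (Nat.le_zero.mp (by exact_mod_cast this))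

end

/-- For a distinguished nilpotent `e`, the eigenspace of `ad h` in `𝔤^e`
for the largest eigenvalue `m_r` is contained in the centre `𝔷(𝔤^e)`; consequently `m_r` is
also the largest eigenvalue of `ad h` on `𝔷(𝔤^e)` and the two eigenspaces coincide, i.e. the
`m_r`-eigenspace of `ad h` in `𝔤^e` is `𝔷_max`. -/
theorem top_eigenspace_le_center
    (L : Type*) [LieRing L] [LieAlgebra ℂ L] [FiniteDimensional ℂ L]
    [LieAlgebra.IsSemisimple ℂ L] (e h f : L)
    (ht : IsSl2Triple h e f) (he : IsNilpotent (LieAlgebra.ad ℂ L e))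
    (hdist : IsDistinguished L e) (mr : ℂ)
    (hmr : ∃ z : L, z ≠ 0 ∧ ⁅z, e⁆ = 0 ∧ ⁅h, z⁆ = mr • z)
    (hmax : ∀ m : ℂ, (∃ z : L, z ≠ 0 ∧ ⁅z, e⁆ = 0 ∧ ⁅h, z⁆ = m • z) → m ≤ mr) :
    (∀ z : L, ⁅z, e⁆ = 0 → ⁅h, z⁆ = mr • z → InCenterOfCentralizer L e z) ∧
    (∀ m : ℂ, (∃ z : L, z ≠ 0 ∧ InCenterOfCentralizer L e z ∧ ⁅h, z⁆ = m • z) → m ≤ mr) ∧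
    {z : L | ⁅z, e⁆ = 0 ∧ ⁅h, z⁆ = mr • z} =
      {z : L | InCenterOfCentralizer L e z ∧ ⁅h, z⁆ = mr • z} := by
  have hc : ∀ z : L, ⁅z, e⁆ = 0 → ⁅h, z⁆ = mr • z → InCenterOfCentralizer L e z :=
    fun z hz hhz ↦ hdist.mem_center_of_top_weight ht hmax hz hhz
  refine ⟨hc, fun m ⟨z, hz0, hz, hm⟩ ↦ hmax m ⟨z, hz0, hz.1, hm⟩, Set.ext fun z ↦ ?_⟩
  exact ⟨fun hz ↦ ⟨hc z hz.1 hz.2, hz.2⟩, fun hz ↦ ⟨hz.1.1, hz.2⟩⟩
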